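/- Under the stated parameter constraints: Re g(t) > 0 for all t ∈ [0, Z₀), Re g(Z₀) = 0, and Re g(t) < 0 for all t > Z₀. Consequently t ↦ Re S(t) is strictly increasing on [0, Z₀], strictly decreasing on [Z₀, ∞), and attains its unique global maximum over [0,∞) at t = Z₀. -/

import Mathlib

open MeasureTheory Set

/-- `t₀(α) = 2πα/(α+2)`. -/
noncomputable def t0 (α : ℝ) : ℝ := 2 * Real.pi * α / (α + 2)

/-!
Put `h = i g`, so that `h² = -q = μ - c t^α`. Since `sin θ` and `sin (θ - φ)` are positive, the line
`r ↦ μ - c r` never meets `(-∞, 0]`; a square root of a number outside `(-∞, 0]` is not purely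
imaginary, so `Re h = -Im g` has no zero and `Im g` keeps the sign of `Im g(0) = -cos (φ / 2) < 0`.
Hence `Re g` and `2 Re g Im g = Im q = sin θ t^α - sin φ` have opposite signs, and the latter
vanishes on `[0, ∞)` exactly at `Z₀`, where it turns from negative to positive. The monotonicity of
`Re S` follows because `Re S` is a primitive of `Re g`.
-/

theorem pi_mul_min_le_three_mul_t0 {α : ℝ} (hα : 0 ≤ α) : Real.pi * min 1 α ≤ 3 * t0 α := by
  have hmin : min 1 α ≤ 6 * α / (α + 2) := by
    rw [le_div_iff₀ (by positivity)]
    rcases le_total 1 α with h | h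
    · rw [min_eq_left h]
      linarith
    · rw [min_eq_right h]
      nlinarith
  calc
    Real.pi * min 1 α ≤ Real.pi * (6 * α / (α + 2)) := by gcongr
    _ = 3 * t0 α := by rw [t0]; ring

theorem pos_of_t0_sub_lt {α θ δ φ : ℝ} (hα : 0 ≤ α) (hθ : t0 α ≤ θ)
    (hδ : δ < (Real.pi * min 1 α - θ) / 2) (hφ : t0 α - δ < φ) : 0 < φ := by
  linarith [pi_mul_min_le_three_mul_t0 hα]

section SquareRoots

theorem im_sq_eq_two_mul_re_mul_im (z : ℂ) : (z ^ 2).im = 2 * (z.re * z.im) := by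
  rw [sq, Complex.mul_im]
  ring

variable {z : ℂ}

theorem re_pos_iff_im_sq_neg (hz : z.im < 0) : 0 < z.re ↔ (z ^ 2).im < 0 := by
  simp [im_sq_eq_two_mul_re_mul_im, mul_neg_iff, hz, hz.not_gt]

theorem re_neg_iff_im_sq_pos (hz : z.im < 0) : z.re < 0 ↔ 0 < (z ^ 2).im := by
  simp [im_sq_eq_two_mul_re_mul_im, mul_pos_iff, hz, hz.not_gt]

theorem re_eq_zero_iff_im_sq_eq_zero (hz : z.im ≠ 0) : z.re = 0 ↔ (z ^ 2).im = 0 := by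
  simp [im_sq_eq_two_mul_re_mul_im, hz]

theorem im_ne_zero_of_neg_sq_mem_slitPlane (hz : -z ^ 2 ∈ Complex.slitPlane) : z.im ≠ 0 := by
  intro him
  lift z to ℝ using him
  rw [← Complex.ofReal_pow, Complex.neg_ofReal_mem_slitPlane] at hz
  exact hz.not_ge (sq_nonneg z)

theorem im_neg_of_neg_sq_mem_slitPlane {X : Type*} [TopologicalSpace X] {s : Set X}
    (hs : IsPreconnected s) {g : X → ℂ} (hg : ContinuousOn g s)
    (hsq : ∀ x ∈ s, -g x ^ 2 ∈ Complex.slitPlane) {x₀ x : X} (hx₀ : x₀ ∈ s)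
    (h₀ : (g x₀).im < 0) (hx : x ∈ s) : (g x).im < 0 :=
  hs.gt_of_ne (Complex.continuous_im.comp_continuousOn hg)
    (fun y hy => im_ne_zero_of_neg_sq_mem_slitPlane (hsq y hy)) ⟨x₀, hx₀, h₀⟩ hx

end SquareRoots

section Primitives

variable {𝕜 : Type*} [RCLike 𝕜] {f : ℝ → 𝕜} {c : ℝ} {s : Set ℝ}

theorem strictMonoOn_re_intervalIntegral (hs : s.OrdConnected)
    (hf : ∀ t ∈ s, IntervalIntegrable f volume c t)
    (hpos : ∀ t ∈ interior s, 0 < RCLike.re (f t)) :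
    StrictMonoOn (fun t => RCLike.re (∫ x in c..t, f x)) s := by
  intro a ha b hb hab
  have hfab : IntervalIntegrable f volume a b := (hf a ha).symm.trans (hf b hb)
  have hsub : Ioo a b ⊆ interior s :=
    interior_maximal (Ioo_subset_Icc_self.trans (hs.out ha hb)) isOpen_Ioo
  rw [← sub_pos, ← map_sub, intervalIntegral.integral_interval_sub_left (hf b hb) (hf a ha),
    ← intervalIntegral.intervalIntegral_re hfab]
  exact intervalIntegral.intervalIntegral_pos_of_pos_on ⟨hfab.1.re, hfab.2.re⟩
    (fun x hx => hpos x (hsub hx)) hab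

theorem strictAntiOn_re_intervalIntegral (hs : s.OrdConnected)
    (hf : ∀ t ∈ s, IntervalIntegrable f volume c t)
    (hneg : ∀ t ∈ interior s, RCLike.re (f t) < 0) :
    StrictAntiOn (fun t => RCLike.re (∫ x in c..t, f x)) s := by
  have hmono : StrictMonoOn (fun t => RCLike.re (∫ x in c..t, (-f) x)) s :=
    strictMonoOn_re_intervalIntegral hs (fun t ht => (hf t ht).neg) fun t ht => by
      simpa only [Pi.neg_apply, map_neg, neg_pos] using hneg t ht
  simpa only [Pi.neg_apply, intervalIntegral.integral_neg, map_neg, neg_neg] using hmono.neg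

end Primitives

theorem lt_of_strictMonoOn_Icc_of_strictAntiOn_Ici {β γ : Type*} [LinearOrder β] [Preorder γ]
    {F : β → γ} {a b t : β} (hmono : StrictMonoOn F (Icc a b)) (hanti : StrictAntiOn F (Ici b))
    (hat : a ≤ t) (htb : t ≠ b) : F t < F b := by
  rcases htb.lt_or_gt with h | h
  · exact hmono ⟨hat, h.le⟩ ⟨hat.trans h.le, le_rfl⟩ h
  · exact hanti self_mem_Ici h.le h

/-- The function `q(t) = c t^α - μ` on `[0, ∞)`, for `c = e^{iθ}` and `μ = e^{iφ}`. -/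
noncomputable def radicand (α θ φ t : ℝ) : ℂ :=
  Complex.exp (Complex.I * (θ : ℂ)) * ((t ^ α : ℝ) : ℂ) - Complex.exp (Complex.I * (φ : ℂ))

/-- The point `Z₀` of `[0, ∞)` at which `Im q` vanishes, for `q = radicand α θ φ` with `0 < α`,
`0 ≤ sin φ` and `0 < sin θ`. -/
noncomputable def turningPoint (α θ φ : ℝ) : ℝ := (Real.sin φ / Real.sin θ) ^ (1 / α)

section Radicand

theorem radicand_re (α θ φ t : ℝ) :
    (radicand α θ φ t).re = Real.cos θ * t ^ α - Real.cos φ := by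
  rw [radicand, mul_comm Complex.I, mul_comm Complex.I, Complex.sub_re, Complex.re_mul_ofReal,
    Complex.exp_ofReal_mul_I_re, Complex.exp_ofReal_mul_I_re]

theorem radicand_im (α θ φ t : ℝ) :
    (radicand α θ φ t).im = Real.sin θ * t ^ α - Real.sin φ := by
  rw [radicand, mul_comm Complex.I, mul_comm Complex.I, Complex.sub_im, Complex.im_mul_ofReal,
    Complex.exp_ofReal_mul_I_im, Complex.exp_ofReal_mul_I_im]

variable {α θ φ t : ℝ}

theorem neg_radicand_mem_slitPlane (hθ : 0 < Real.sin θ) (hθφ : 0 < Real.sin (θ - φ)) :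
    -radicand α θ φ t ∈ Complex.slitPlane := by
  rw [Complex.mem_slitPlane_iff, Complex.neg_re, Complex.neg_im, neg_ne_zero, or_iff_not_imp_right,
    not_not]
  intro him
  have hre : Real.sin θ * -(radicand α θ φ t).re = Real.sin (θ - φ) := by
    rw [radicand_im] at him
    rw [radicand_re, Real.sin_sub]
    linear_combination -Real.cos θ * him
  exact pos_of_mul_pos_right (hre ▸ hθφ) hθ.le

theorem turningPoint_nonneg (hφ : 0 ≤ Real.sin φ) (hθ : 0 ≤ Real.sin θ) :
    0 ≤ turningPoint α θ φ :=
  Real.rpow_nonneg (div_nonneg hφ hθ) _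

theorem radicand_im_neg_iff (hα : 0 < α) (hφ : 0 ≤ Real.sin φ) (hθ : 0 < Real.sin θ)
    (ht : 0 ≤ t) : (radicand α θ φ t).im < 0 ↔ t < turningPoint α θ φ := by
  rw [radicand_im, turningPoint, one_div, Real.lt_rpow_inv_iff_of_pos ht (by positivity) hα,
    lt_div_iff₀' hθ, sub_neg]

theorem radicand_im_pos_iff (hα : 0 < α) (hφ : 0 ≤ Real.sin φ) (hθ : 0 < Real.sin θ)
    (ht : 0 ≤ t) : 0 < (radicand α θ φ t).im ↔ turningPoint α θ φ < t := by
  rw [radicand_im, turningPoint, one_div, Real.rpow_inv_lt_iff_of_pos (by positivity) ht hα,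
    div_lt_iff₀' hθ, sub_pos]

theorem radicand_im_eq_zero_iff (hα : α ≠ 0) (hφ : 0 ≤ Real.sin φ) (hθ : 0 < Real.sin θ)
    (ht : 0 ≤ t) : (radicand α θ φ t).im = 0 ↔ t = turningPoint α θ φ := by
  rw [radicand_im, turningPoint, one_div, Real.eq_rpow_inv ht (by positivity) hα,
    eq_div_iff hθ.ne', sub_eq_zero, mul_comm]

end Radicand

theorem im_neg_I_mul_exp_I_mul (x : ℝ) :
    (-Complex.I * Complex.exp (Complex.I * (x : ℂ))).im = -Real.cos x := by
  simp [mul_comm Complex.I (x : ℂ), Complex.exp_ofReal_mul_I_re]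

/-- `g` is the continuous branch on `[0, ∞)` of the square root of `radicand α θ φ` that starts at
`g(0) = -i e^{iφ/2}`. Values of `g` at negative reals are unconstrained. -/
structure IsSqrtBranch (α θ φ : ℝ) (g : ℝ → ℂ) : Prop where
  continuousOn : ContinuousOn g (Ici 0)
  sq_eq : ∀ t : ℝ, 0 ≤ t → g t ^ 2 = radicand α θ φ t
  apply_zero : g 0 = -Complex.I * Complex.exp (Complex.I * ((φ / 2 : ℝ) : ℂ))

namespace IsSqrtBranch

variable {α θ φ t : ℝ} {g : ℝ → ℂ}

theorem intervalIntegrable (hg : IsSqrtBranch α θ φ g) (ht : 0 ≤ t) :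
    IntervalIntegrable g volume 0 t :=
  (hg.continuousOn.mono (ordConnected_Ici.uIcc_subset self_mem_Ici ht)).intervalIntegrable

theorem im_neg (hg : IsSqrtBranch α θ φ g) (hφ : φ ∈ Ioo (-Real.pi) Real.pi)
    (hθ : 0 < Real.sin θ) (hθφ : 0 < Real.sin (θ - φ)) (ht : 0 ≤ t) : (g t).im < 0 := by
  have him0 : (g 0).im < 0 := by
    rw [hg.apply_zero, im_neg_I_mul_exp_I_mul, neg_lt_zero]
    exact Real.cos_pos_of_mem_Ioo ⟨by linarith [hφ.1], by linarith [hφ.2]⟩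
  exact im_neg_of_neg_sq_mem_slitPlane isPreconnected_Ici hg.continuousOn
    (fun x hx => hg.sq_eq x hx ▸ neg_radicand_mem_slitPlane hθ hθφ) self_mem_Ici him0 ht

theorem re_pos_iff (hg : IsSqrtBranch α θ φ g) (hα : 0 < α) (hφ : 0 ≤ Real.sin φ)
    (hθ : 0 < Real.sin θ) (ht : 0 ≤ t) (him : (g t).im < 0) :
    0 < (g t).re ↔ t < turningPoint α θ φ := by
  rw [re_pos_iff_im_sq_neg him, hg.sq_eq t ht, radicand_im_neg_iff hα hφ hθ ht]

theorem re_neg_iff (hg : IsSqrtBranch α θ φ g) (hα : 0 < α) (hφ : 0 ≤ Real.sin φ)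
    (hθ : 0 < Real.sin θ) (ht : 0 ≤ t) (him : (g t).im < 0) :
    (g t).re < 0 ↔ turningPoint α θ φ < t := by
  rw [re_neg_iff_im_sq_pos him, hg.sq_eq t ht, radicand_im_pos_iff hα hφ hθ ht]

theorem re_eq_zero_iff (hg : IsSqrtBranch α θ φ g) (hα : α ≠ 0) (hφ : 0 ≤ Real.sin φ)
    (hθ : 0 < Real.sin θ) (ht : 0 ≤ t) (him : (g t).im ≠ 0) :
    (g t).re = 0 ↔ t = turningPoint α θ φ := by
  rw [re_eq_zero_iff_im_sq_eq_zero him, hg.sq_eq t ht, radicand_im_eq_zero_iff hα hφ hθ ht]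

end IsSqrtBranch

theorem stmt8_general {α θ φ : ℝ} (hα : 0 < α) (hφ : 0 ≤ φ) (hφθ : φ < θ) (hθ : θ < Real.pi)
    {Z₀ : ℝ} (hZ₀ : Z₀ = turningPoint α θ φ) {g : ℝ → ℂ} (hg : IsSqrtBranch α θ φ g)
    {S : ℝ → ℂ} (hS : ∀ t : ℝ, S t = ∫ s in (0 : ℝ)..t, g s) :
    (∀ t ∈ Ico (0 : ℝ) Z₀, 0 < (g t).re) ∧
    (g Z₀).re = 0 ∧
    (∀ t : ℝ, Z₀ < t → (g t).re < 0) ∧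
    StrictMonoOn (fun t => (S t).re) (Icc 0 Z₀) ∧
    StrictAntiOn (fun t => (S t).re) (Ici Z₀) ∧
    (∀ t : ℝ, 0 ≤ t → t ≠ Z₀ → (S t).re < (S Z₀).re) := by
  obtain rfl : S = fun t => ∫ s in (0 : ℝ)..t, g s := funext hS
  have hsφ : 0 ≤ Real.sin φ := Real.sin_nonneg_of_nonneg_of_le_pi hφ (hφθ.trans hθ).le
  have hsθ : 0 < Real.sin θ := Real.sin_pos_of_pos_of_lt_pi (hφ.trans_lt hφθ) hθ
  have hsθφ : 0 < Real.sin (θ - φ) := Real.sin_pos_of_pos_of_lt_pi (by linarith) (by linarith)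
  have hZ₀_nonneg : 0 ≤ Z₀ := hZ₀ ▸ turningPoint_nonneg hsφ hsθ.le
  have him : ∀ t, 0 ≤ t → (g t).im < 0 := fun t =>
    hg.im_neg ⟨by linarith [Real.pi_pos], hφθ.trans hθ⟩ hsθ hsθφ
  have hpos : ∀ t ∈ Ico 0 Z₀, 0 < (g t).re := fun t ht =>
    (hg.re_pos_iff hα hsφ hsθ ht.1 (him t ht.1)).2 (hZ₀ ▸ ht.2)
  have hzero : (g Z₀).re = 0 :=
    (hg.re_eq_zero_iff hα.ne' hsφ hsθ hZ₀_nonneg (him Z₀ hZ₀_nonneg).ne).2 hZ₀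
  have hneg : ∀ t, Z₀ < t → (g t).re < 0 := fun t ht =>
    have ht0 : 0 ≤ t := hZ₀_nonneg.trans ht.le
    (hg.re_neg_iff hα hsφ hsθ ht0 (him t ht0)).2 (hZ₀ ▸ ht)
  have hmono : StrictMonoOn (fun t => (∫ s in (0 : ℝ)..t, g s).re) (Icc 0 Z₀) :=
    strictMonoOn_re_intervalIntegral ordConnected_Icc (fun t ht => hg.intervalIntegrable ht.1)
      fun t ht => hpos t (Ioo_subset_Ico_self (interior_Icc.subset ht))
  have hanti : StrictAntiOn (fun t => (∫ s in (0 : ℝ)..t, g s).re) (Ici Z₀) :=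
    strictAntiOn_re_intervalIntegral ordConnected_Ici
      (fun t ht => hg.intervalIntegrable (hZ₀_nonneg.trans ht))
      fun t ht => hneg t (interior_Ici.subset ht)
  exact ⟨hpos, hzero, hneg, hmono, hanti, fun _ =>
    lt_of_strictMonoOn_Icc_of_strictAntiOn_Ici hmono hanti⟩

/-- with `c = e^{iθ}`, `μ = e^{iφ}`, `q(t) = c t^α − μ`,
`Z₀ = (sin φ / sin θ)^{1/α}`, `g` the continuous branch of `√q` on `[0,∞)` with
`g(0) = −i e^{iφ/2}` and `S(t) = ∫₀^t g`: `Re g > 0` on `[0, Z₀)`, `Re g(Z₀) = 0`,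
`Re g < 0` on `(Z₀,∞)`; hence `Re S` strictly increases on `[0,Z₀]`, strictly decreases
on `[Z₀,∞)`, and has its unique global maximum over `[0,∞)` at `Z₀`. -/
theorem stmt8 (α θ δ φ : ℝ) (hα0 : 0 < α) (hα2 : α < 2)
    (hθ1 : t0 α ≤ θ) (hθ2 : θ < min Real.pi (Real.pi * α))
    (hδ1 : 0 < δ) (hδ2 : δ < (Real.pi * min 1 α - θ) / 2)
    (hφ1 : t0 α - δ < φ) (hφ2 : φ < t0 α)
    (Z₀ : ℝ) (hZ₀ : Z₀ = (Real.sin φ / Real.sin θ) ^ (1 / α))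
    (g : ℝ → ℂ) (hgcont : ContinuousOn g (Set.Ici 0))
    (hgsq : ∀ t : ℝ, 0 ≤ t →
      g t ^ 2 = Complex.exp (Complex.I * (θ : ℂ)) * ((t ^ α : ℝ) : ℂ)
        - Complex.exp (Complex.I * (φ : ℂ)))
    (hg0 : g 0 = -Complex.I * Complex.exp (Complex.I * ((φ / 2 : ℝ) : ℂ)))
    (S : ℝ → ℂ) (hS : ∀ t : ℝ, S t = ∫ s in (0 : ℝ)..t, g s) :
    (∀ t ∈ Set.Ico (0 : ℝ) Z₀, 0 < (g t).re) ∧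
    (g Z₀).re = 0 ∧
    (∀ t : ℝ, Z₀ < t → (g t).re < 0) ∧
    StrictMonoOn (fun t => (S t).re) (Set.Icc 0 Z₀) ∧
    StrictAntiOn (fun t => (S t).re) (Set.Ici Z₀) ∧
    (∀ t : ℝ, 0 ≤ t → t ≠ Z₀ → (S t).re < (S Z₀).re) :=
  stmt8_general hα0 (pos_of_t0_sub_lt hα0.le hθ1 hδ2 hφ1).le (hφ2.trans_le hθ1)
    (hθ2.trans_le (min_le_left _ _)) hZ₀ ⟨hgcont, hgsq, hg0⟩ hS
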